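/- Let 1 ≤ k ≤ L be integers and λ > 0. For every g ∈ Ū, there exists exactly one solution of the mean-field ODE system with initial condition g taking values in Ū for all t ≥ 0. -/

import Mathlib

open Finset Set

/-- The polynomial `f ≡ f^{(L,k)}` from the paper. -/
noncomputable def fLk (L k : ℕ) (x : ℝ) : ℝ :=
  ∑ i ∈ Finset.Icc 1 k,
    (L.choose (L - k + i) : ℝ) * ((L - k + i - 2).choose (i - 1) : ℝ) *
      (-1 : ℝ) ^ (i - 1) * x ^ (L - k + i)

/-- Membership in `Ū`: real sequences with `1 = u_0 ≥ u_1 ≥ … ≥ 0`. -/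
def InUbar (u : ℕ → ℝ) : Prop :=
  u 0 = 1 ∧ (∀ j, u (j + 1) ≤ u j) ∧ (∀ j, 0 ≤ u j)

/-- A `Ū`-valued solution of the mean-field ODE system \eqref{eqn:sODE}
with initial condition `g`. -/
def IsMFSol (L k : ℕ) (lam : ℝ) (g : ℕ → ℝ) (u : ℝ → ℕ → ℝ) : Prop :=
  (∀ j, u 0 j = g j) ∧
  (∀ t ∈ Set.Ici (0 : ℝ), InUbar (u t)) ∧
  (∀ j, 1 ≤ j → ∀ t ∈ Set.Ici (0 : ℝ),
    HasDerivWithinAt (fun τ => u τ j)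
      (lam * (fLk L k (u t (j - 1)) - fLk L k (u t j)) - k * (u t j - u t (j + 1)))
      (Set.Ici (0 : ℝ)) t)

/-!
Written as `u_j' = F (u_{j-1}, u_j, u_{j+1})`, the mean-field system is cooperative: because `f` is
nondecreasing on `[0, 1]`, `F` is nondecreasing in the two outer arguments, so that for `c` at least
the Lipschitz constant of `F` the damped field `F + c * u_j` is nondecreasing in all three. Hence
the Picard map of `u_j' + c * u_j = (F + c * u_j)` is monotone, and it preserves `Ū` because `F`
vanishes at the constant states `0` and `1`. Its iterates starting from the constant path `1`
decrease to a fixed point by dominated convergence, which gives existence.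

For uniqueness, the differences of two solutions have derivatives at most `K` times their supremum
over `j`, and starting from the bound `1` one obtains `(K t) ^ n / n!` for every `n`.

The monotonicity of `f` comes from `f' 0 = 0` together with the Beta-type formula
`f'' x = (p + q + 2) (p + q + 1) (p + q).choose p * x ^ p * (1 - x) ^ q`, where `p = L - k - 1` and
`q = k - 1` (for `k = L` the polynomial is linear).
-/

open Filter MeasureTheory Topology
open scoped NNReal

lemma hasDerivAt_pow_div_factorial (K : ℝ) (n : ℕ) (t : ℝ) :
    HasDerivAt (fun s => (K * s) ^ (n + 1) / (n + 1).factorial)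
      (K * ((K * t) ^ n / n.factorial)) t := by
  refine ((((hasDerivAt_id t).const_mul K).pow (n + 1)).div_const _).congr_deriv ?_
  rw [Nat.factorial_succ]
  push_cast
  simp only [id]
  field_simp

lemma norm_le_mul_pow_div_factorial_of_norm_deriv_le {ι E : Type*} [NormedAddCommGroup E]
    [NormedSpace ℝ E] {w w' : ℝ → ι → E} {C K : ℝ} (hw₀ : ∀ i, w 0 i = 0)
    (hw : ∀ i t, 0 ≤ t → HasDerivWithinAt (fun s => w s i) (w' t i) (Set.Ici 0) t)
    (hC : ∀ t, 0 ≤ t → ∀ i, ‖w t i‖ ≤ C)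
    (hK : ∀ t, 0 ≤ t → ∀ B, (∀ i, ‖w t i‖ ≤ B) → ∀ i, ‖w' t i‖ ≤ K * B)
    (n : ℕ) {t : ℝ} (ht : 0 ≤ t) (i : ι) : ‖w t i‖ ≤ C * ((K * t) ^ n / n.factorial) := by
  induction n generalizing t i with
  | zero => simpa using hC t ht i
  | succ n ih =>
    refine image_norm_le_of_norm_deriv_right_le_deriv_boundary (f := fun s => w s i)
      (fun s hs => (hw i s hs.1).continuousWithinAt.mono Set.Icc_subset_Ici_self)
      (fun s hs => (hw i s hs.1).mono (Set.Ici_subset_Ici.2 hs.1)) (by simp [hw₀])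
      (fun s => (hasDerivAt_pow_div_factorial K n s).const_mul C) (fun s hs => ?_)
      (Set.right_mem_Icc.2 ht)
    exact (hK s hs.1 _ (fun i => ih hs.1 i) i).trans_eq (mul_left_comm _ _ _)

lemma eq_zero_of_norm_deriv_le {ι E : Type*} [NormedAddCommGroup E]
    [NormedSpace ℝ E] {w w' : ℝ → ι → E} {C K : ℝ} (hw₀ : ∀ i, w 0 i = 0)
    (hw : ∀ i t, 0 ≤ t → HasDerivWithinAt (fun s => w s i) (w' t i) (Set.Ici 0) t)
    (hC : ∀ t, 0 ≤ t → ∀ i, ‖w t i‖ ≤ C)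
    (hK : ∀ t, 0 ≤ t → ∀ B, (∀ i, ‖w t i‖ ≤ B) → ∀ i, ‖w' t i‖ ≤ K * B)
    {t : ℝ} (ht : 0 ≤ t) (i : ι) : w t i = 0 := by
  have hlim : Tendsto (fun n : ℕ => C * ((K * t) ^ n / n.factorial)) atTop (𝓝 0) := by
    simpa using (FloorSemiring.tendsto_pow_div_factorial_atTop (K * t)).const_mul C
  exact norm_le_zero_iff.1 <| ge_of_tendsto' hlim fun n =>
    norm_le_mul_pow_div_factorial_of_norm_deriv_le hw₀ hw hC hK n ht i

/-- The solution `y` of the scalar equation `y' = h - c * y` with `y 0 = b`, in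
variation-of-constants form. -/
noncomputable def duhamel (c b : ℝ) (h : ℝ → ℝ) (t : ℝ) : ℝ :=
  Real.exp (-(c * t)) * (b + ∫ s in (0 : ℝ)..t, Real.exp (c * s) * h s)

section Duhamel

variable {c b b' t : ℝ} {h h' : ℝ → ℝ}

lemma duhamel_zero (c b : ℝ) (h : ℝ → ℝ) : duhamel c b h 0 = b := by
  simp [duhamel]

lemma hasDerivAt_duhamel (hh : Continuous h) (b t : ℝ) :
    HasDerivAt (duhamel c b h) (h t - c * duhamel c b h t) t := by
  have hint : HasDerivAt (fun t => b + ∫ s in (0 : ℝ)..t, Real.exp (c * s) * h s)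
      (Real.exp (c * t) * h t) t :=
    ((Continuous.integral_hasStrictDerivAt (by fun_prop) 0 t).hasDerivAt).const_add b
  have hexp : HasDerivAt (fun t => Real.exp (-(c * t))) (Real.exp (-(c * t)) * -c) t := by
    simpa using ((hasDerivAt_id t).const_mul c).neg.exp
  refine (hexp.mul hint).congr_deriv ?_
  rw [← mul_assoc (Real.exp (-(c * t))), ← Real.exp_add, neg_add_cancel, Real.exp_zero, duhamel]
  ring

lemma duhamel_const (c a t : ℝ) : duhamel c a (fun _ => c * a) t = a := by
  have hderiv : ∀ s, HasDerivAt (fun s => Real.exp (c * s) * a)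
      (Real.exp (c * s) * (c * a)) s := fun s => by
    simpa [mul_assoc] using (((hasDerivAt_id s).const_mul c).exp).mul_const a
  rw [duhamel, intervalIntegral.integral_eq_sub_of_hasDerivAt (fun s _ => hderiv s)
    (Continuous.intervalIntegrable (by fun_prop) _ _), mul_zero, Real.exp_zero, one_mul,
    add_sub_cancel, ← mul_assoc, ← Real.exp_add, neg_add_cancel, Real.exp_zero, one_mul]

lemma intervalIntegrable_exp_mul (hh : IntervalIntegrable h volume b b') :
    IntervalIntegrable (fun s => Real.exp (c * s) * h s) volume b b' :=
  hh.continuousOn_mul (by fun_prop)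

lemma continuous_duhamel (hh : ∀ x y, IntervalIntegrable h volume x y) :
    Continuous (duhamel c b h) := by
  have := intervalIntegral.continuous_primitive
    (fun x y => intervalIntegrable_exp_mul (c := c) (hh x y)) 0
  unfold duhamel
  fun_prop

lemma duhamel_mono (ht : 0 ≤ t) (hb : b ≤ b') (hh : IntervalIntegrable h volume 0 t)
    (hh' : IntervalIntegrable h' volume 0 t) (hle : ∀ s ∈ Set.Icc 0 t, h s ≤ h' s) :
    duhamel c b h t ≤ duhamel c b' h' t := by
  unfold duhamel
  gcongr
  refine intervalIntegral.integral_mono_on ht (intervalIntegrable_exp_mul hh)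
    (intervalIntegrable_exp_mul hh') fun s hs => ?_
  gcongr
  exact hle s hs

lemma tendsto_duhamel {hₙ : ℕ → ℝ → ℝ} {C : ℝ} (hmeas : ∀ n, Measurable (hₙ n))
    (hC : ∀ n s, ‖hₙ n s‖ ≤ C) (hlim : ∀ s, Tendsto (fun n => hₙ n s) atTop (𝓝 (h s))) :
    Tendsto (fun n => duhamel c b (hₙ n) t) atTop (𝓝 (duhamel c b h t)) := by
  refine (Tendsto.const_add b ?_).const_mul _
  refine intervalIntegral.tendsto_integral_filter_of_dominated_convergence
    (fun s => Real.exp (c * s) * C) (.of_forall fun n => ?_)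
    (.of_forall fun n => .of_forall fun s _ => ?_)
    (Continuous.intervalIntegrable (by fun_prop) _ _)
    (.of_forall fun s _ => (hlim s).const_mul _)
  · have := hmeas n
    fun_prop
  · rw [norm_mul, Real.norm_of_nonneg (Real.exp_pos _).le]
    gcongr
    exact hC n s

end Duhamel

lemma InUbar.antitone {v : ℕ → ℝ} (hv : InUbar v) : Antitone v :=
  antitone_nat_of_succ_le hv.2.1

lemma InUbar.mem_Icc {v : ℕ → ℝ} (hv : InUbar v) (j : ℕ) : v j ∈ Set.Icc (0 : ℝ) 1 :=
  ⟨hv.2.2 j, hv.1 ▸ hv.antitone (Nat.zero_le j)⟩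

/-- Three consecutive entries of `v`; the middle one has index `j + 1`, so that no boundary
convention is needed at `j = 0`. -/
def window (v : ℕ → ℝ) (j : ℕ) : ℝ × ℝ × ℝ :=
  (v j, v (j + 1), v (j + 2))

lemma window_mono {v w : ℕ → ℝ} (h : v ≤ w) (j : ℕ) : window v j ≤ window w j :=
  ⟨h j, h (j + 1), h (j + 2)⟩

lemma window_succ_le {v : ℕ → ℝ} (hv : Antitone v) (j : ℕ) :
    window v (j + 1) ≤ window v j :=
  ⟨hv (Nat.le_succ _), hv (Nat.le_succ _), hv (Nat.le_succ _)⟩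

lemma InUbar.window_mem_Icc {v : ℕ → ℝ} (hv : InUbar v) (j : ℕ) :
    window v j ∈ Set.Icc (0 : ℝ × ℝ × ℝ) 1 :=
  ⟨⟨(hv.mem_Icc _).1, (hv.mem_Icc _).1, (hv.mem_Icc _).1⟩,
    (hv.mem_Icc _).2, (hv.mem_Icc _).2, (hv.mem_Icc _).2⟩

/-- `u` is a `Ū`-valued solution on `[0, ∞)` of the nearest-neighbour system
`u_j' = F (u_{j-1}, u_j, u_{j+1})`, `j ≥ 1`, with initial condition `g`. -/
structure IsUbarSol (F : ℝ × ℝ × ℝ → ℝ) (g : ℕ → ℝ) (u : ℝ → ℕ → ℝ) : Prop where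
  initial : ∀ j, u 0 j = g j
  inUbar : ∀ t, 0 ≤ t → InUbar (u t)
  hasDerivWithinAt : ∀ j t, 0 ≤ t →
    HasDerivWithinAt (fun s => u s (j + 1)) (F (window (u t) j)) (Set.Ici 0) t

lemma IsUbarSol.congr {F G : ℝ × ℝ × ℝ → ℝ} {g : ℕ → ℝ} {u : ℝ → ℕ → ℝ} (hu : IsUbarSol F g u)
    (hFG : Set.EqOn F G (Set.Icc 0 1)) : IsUbarSol G g u where
  initial := hu.initial
  inUbar := hu.inUbar
  hasDerivWithinAt j t ht :=
    hFG ((hu.inUbar t ht).window_mem_Icc j) ▸ hu.hasDerivWithinAt j t ht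

lemma IsUbarSol.unique {F : ℝ × ℝ × ℝ → ℝ} {K : ℝ≥0} (hF : LipschitzWith K F) {g : ℕ → ℝ}
    {u v : ℝ → ℕ → ℝ} (hu : IsUbarSol F g u) (hv : IsUbarSol F g v) {t : ℝ} (ht : 0 ≤ t) (j : ℕ) :
    u t j = v t j := by
  obtain _ | j := j
  · rw [(hu.inUbar t ht).1, (hv.inUbar t ht).1]
  refine sub_eq_zero.1 <| eq_zero_of_norm_deriv_le (w := fun t j => u t (j + 1) - v t (j + 1))
    (fun i => by rw [hu.initial, hv.initial, sub_self])
    (fun i s hs => (hu.hasDerivWithinAt i s hs).sub (hv.hasDerivWithinAt i s hs))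
    (fun s hs i =>
      Real.dist_le_of_mem_Icc_01 ((hu.inUbar s hs).mem_Icc _) ((hv.inUbar s hs).mem_Icc _))
    (K := K) (fun s hs B hB i => ?_) ht j
  have hB' : ∀ i, dist (u s i) (v s i) ≤ B := by
    rintro (_ | i)
    · rw [(hu.inUbar s hs).1, (hv.inUbar s hs).1, dist_self]
      exact (norm_nonneg _).trans (hB 0)
    · exact hB i
  calc
    _ ≤ K * dist (window (u s) i) (window (v s) i) := hF.dist_le_mul _ _
    _ ≤ K * B := by
      gcongr
      exact max_le (hB' i) (max_le (hB' (i + 1)) (hB' (i + 2)))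

/-- The Kamke–Müller quasimonotonicity condition for the middle coordinate: `F` is nondecreasing
in the two outer coordinates. -/
def QuasimonotoneOn (F : ℝ × ℝ × ℝ → ℝ) (s : Set (ℝ × ℝ × ℝ)) : Prop :=
  ∀ p ∈ s, ∀ q ∈ s, p ≤ q → p.2.1 = q.2.1 → F p ≤ F q

lemma QuasimonotoneOn.monotone_add_mul {F : ℝ × ℝ × ℝ → ℝ} {K : ℝ≥0}
    (hF : QuasimonotoneOn F Set.univ) (hK : LipschitzWith K F) :
    Monotone fun p => F p + K * p.2.1 := by
  rintro ⟨x, y, z⟩ ⟨x', y', z'⟩ hle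
  obtain ⟨hx : x ≤ x', hy : y ≤ y', hz : z ≤ z'⟩ := hle
  have houter : F (x, y, z) ≤ F (x', y, z') := hF _ trivial _ trivial ⟨hx, le_rfl, hz⟩ rfl
  have hmiddle : F (x', y, z') - F (x', y', z') ≤ K * (y' - y) := by
    have hdist : dist (x', y, z') (x', y', z') = y' - y := by
      simp [Prod.dist_eq, Real.dist_eq, abs_of_nonpos, hy]
    exact hdist ▸ (le_abs_self _).trans (hK.dist_le_mul _ _)
  simp only
  linarith

/-- The hypotheses of the monotone iteration for `u_j' = F (u_{j-1}, u_j, u_{j+1})`: after adding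
the damping `c * u_j` the field is nondecreasing in all coordinates, and the constant states `0`
and `1` are a sub- and a supersolution. -/
structure IsCooperative (c : ℝ) (F : ℝ × ℝ × ℝ → ℝ) : Prop where
  continuous : Continuous F
  monotone_add_mul : Monotone fun p => F p + c * p.2.1
  zero_le : 0 ≤ F 0
  le_zero : F 1 ≤ 0

lemma IsCooperative.add_mul_mem_Icc {c : ℝ} {F : ℝ × ℝ × ℝ → ℝ} (hF : IsCooperative c F)
    {p : ℝ × ℝ × ℝ} (hp : p ∈ Set.Icc (0 : ℝ × ℝ × ℝ) 1) : F p + c * p.2.1 ∈ Set.Icc 0 c := by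
  have h₀ := hF.monotone_add_mul hp.1
  have h₁ := hF.monotone_add_mul hp.2
  simp only [Prod.snd_zero, Prod.fst_zero, Prod.snd_one, Prod.fst_one] at h₀ h₁
  constructor <;> linarith [hF.zero_le, hF.le_zero]

/-- A measurable `Ū`-valued trajectory. Measurability is stable under pointwise limits, which is
why it replaces continuity; the order is the pointwise one. -/
abbrev UbarPath : Type :=
  {u : ℝ → ℕ → ℝ // (∀ t, InUbar (u t)) ∧ ∀ j, Measurable fun t => u t j}

namespace UbarPath

lemma inUbar (u : UbarPath) (t : ℝ) : InUbar (u.1 t) := u.2.1 t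

lemma measurable_window (u : UbarPath) (j : ℕ) : Measurable fun t => window (u.1 t) j :=
  (u.2.2 j).prodMk ((u.2.2 (j + 1)).prodMk (u.2.2 (j + 2)))

/-- The inhomogeneity of the equation `u_{j+1}' = source - c * u_{j+1}`. -/
def source (c : ℝ) (F : ℝ × ℝ × ℝ → ℝ) (u : UbarPath) (j : ℕ) (t : ℝ) : ℝ :=
  F (window (u.1 t) j) + c * u.1 t (j + 1)

variable {c : ℝ} {F : ℝ × ℝ × ℝ → ℝ} {g : ℕ → ℝ}

lemma source_mem_Icc (hF : IsCooperative c F) (u : UbarPath) (j : ℕ) (t : ℝ) :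
    source c F u j t ∈ Set.Icc 0 c :=
  hF.add_mul_mem_Icc ((u.inUbar t).window_mem_Icc j)

lemma norm_source_le (hF : IsCooperative c F) (u : UbarPath) (j : ℕ) (t : ℝ) :
    ‖source c F u j t‖ ≤ c := by
  obtain ⟨h₀, h₁⟩ := source_mem_Icc hF u j t
  rwa [Real.norm_of_nonneg h₀]

lemma measurable_source (hF : Continuous F) (u : UbarPath) (j : ℕ) : Measurable (source c F u j) :=
  (hF.measurable.comp (u.measurable_window j)).add ((u.2.2 (j + 1)).const_mul c)

lemma intervalIntegrable_source (hF : IsCooperative c F) (u : UbarPath) (j : ℕ) (x y : ℝ) :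
    IntervalIntegrable (source c F u j) volume x y :=
  (intervalIntegrable_const (c := c)).mono_fun
    (measurable_source hF.continuous u j).aestronglyMeasurable
    (.of_forall fun t => (norm_source_le hF u j t).trans (le_abs_self c))

lemma source_mono (hF : IsCooperative c F) {u v : UbarPath} (huv : u ≤ v) (j : ℕ) (t : ℝ) :
    source c F u j t ≤ source c F v j t :=
  hF.monotone_add_mul (window_mono (huv t) j)

lemma source_succ_le (hF : IsCooperative c F) (u : UbarPath) (j : ℕ) (t : ℝ) :
    source c F u (j + 1) t ≤ source c F u j t :=
  hF.monotone_add_mul (window_succ_le (u.inUbar t).antitone j)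

lemma tendsto_source (hF : Continuous F) {U : ℕ → UbarPath} {u : UbarPath}
    (hU : Tendsto (fun n => (U n).1) atTop (𝓝 u.1)) (j : ℕ) (t : ℝ) :
    Tendsto (fun n => source c F (U n) j t) atTop (𝓝 (source c F u j t)) := by
  have hlim : ∀ i, Tendsto (fun n => (U n).1 t i) atTop (𝓝 (u.1 t i)) := fun i =>
    (hU.apply_nhds t).apply_nhds i
  exact ((hF.tendsto _).comp ((hlim j).prodMk_nhds ((hlim (j + 1)).prodMk_nhds
    (hlim (j + 2))))).add ((hlim (j + 1)).const_mul c)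

/-- The underlying function of the Picard map `UbarPath.picard`: each coordinate is replaced by the
solution of its scalar equation with the given source. Times are clamped to `[0, ∞)`, so that the
result stays in `Ū` at negative times too. -/
noncomputable def picardFun (c : ℝ) (F : ℝ × ℝ × ℝ → ℝ) (g : ℕ → ℝ) (u : UbarPath) (t : ℝ) :
    ℕ → ℝ
  | 0 => 1
  | j + 1 => duhamel c (g (j + 1)) (source c F u j) (max t 0)

lemma inUbar_picardFun (hF : IsCooperative c F) (hg : InUbar g) (u : UbarPath) (t : ℝ) :
    InUbar (picardFun c F g u t) := by
  have ht : 0 ≤ max t 0 := le_max_right t 0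
  refine ⟨rfl, ?_, ?_⟩
  · rintro (_ | j)
    · calc
        _ ≤ duhamel c 1 (fun _ => c * 1) (max t 0) :=
          duhamel_mono ht (hg.mem_Icc 1).2 (intervalIntegrable_source hF u 0 _ _)
            intervalIntegrable_const fun s _ => (mul_one c).symm ▸ (source_mem_Icc hF u 0 s).2
        _ = 1 := duhamel_const c 1 _
    · exact duhamel_mono ht (hg.2.1 (j + 1)) (intervalIntegrable_source hF u _ _ _)
        (intervalIntegrable_source hF u _ _ _) fun s _ => source_succ_le hF u j s
  · rintro (_ | j)
    · exact zero_le_one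
    · calc
        0 = duhamel c 0 (fun _ => c * 0) (max t 0) := (duhamel_const c 0 _).symm
        _ ≤ _ := duhamel_mono ht (hg.2.2 (j + 1)) intervalIntegrable_const
          (intervalIntegrable_source hF u j _ _)
          fun s _ => (mul_zero c).symm ▸ (source_mem_Icc hF u j s).1

lemma continuous_picardFun (hF : IsCooperative c F) (u : UbarPath) :
    ∀ j, Continuous fun t => picardFun c F g u t j
  | 0 => continuous_const
  | j + 1 => (continuous_duhamel (intervalIntegrable_source hF u j)).comp (by fun_prop)

/-- The Picard map in variation-of-constants form, as a self-map of `UbarPath`. -/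
noncomputable def picard (hF : IsCooperative c F) (hg : InUbar g) (u : UbarPath) : UbarPath :=
  ⟨picardFun c F g u, inUbar_picardFun hF hg u, fun j => (continuous_picardFun hF u j).measurable⟩

lemma monotone_picard (hF : IsCooperative c F) (hg : InUbar g) : Monotone (picard hF hg) := by
  rintro u v huv t (_ | j)
  · exact le_rfl
  · exact duhamel_mono (le_max_right t 0) le_rfl (intervalIntegrable_source hF u j _ _)
      (intervalIntegrable_source hF v j _ _) fun s _ => source_mono hF huv j s

lemma tendsto_picard (hF : IsCooperative c F) (hg : InUbar g) {U : ℕ → UbarPath} {u : UbarPath}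
    (hU : Tendsto (fun n => (U n).1) atTop (𝓝 u.1)) :
    Tendsto (fun n => (picard hF hg (U n)).1) atTop (𝓝 (picard hF hg u).1) := by
  refine tendsto_pi_nhds.2 fun t => tendsto_pi_nhds.2 ?_
  rintro (_ | j)
  · exact tendsto_const_nhds
  · exact tendsto_duhamel (fun n => measurable_source hF.continuous (U n) j)
      (fun n => norm_source_le hF (U n) j) (tendsto_source hF.continuous hU j)

lemma exists_tendsto_of_antitone {U : ℕ → UbarPath} (hU : Antitone U) :
    ∃ u : UbarPath, Tendsto (fun n => (U n).1) atTop (𝓝 u.1) := by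
  let u : ℝ → ℕ → ℝ := fun t j => ⨅ n, (U n).1 t j
  have hlim : ∀ t j, Tendsto (fun n => (U n).1 t j) atTop (𝓝 (u t j)) := fun t j =>
    tendsto_atTop_ciInf (fun m n hmn => hU hmn t j)
      ⟨0, Set.forall_mem_range.2 fun n => ((U n).inUbar t).2.2 j⟩
  have hu : ∀ t, InUbar (u t) := fun t =>
    ⟨tendsto_nhds_unique (hlim t 0) (tendsto_const_nhds.congr fun n => ((U n).inUbar t).1.symm),
      fun j => le_of_tendsto_of_tendsto' (hlim t (j + 1)) (hlim t j)
        fun n => ((U n).inUbar t).2.1 j,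
      fun j => ge_of_tendsto' (hlim t j) fun n => ((U n).inUbar t).2.2 j⟩
  have hmeas : ∀ j, Measurable fun t => u t j := fun j =>
    measurable_of_tendsto_metrizable (fun n => (U n).2.2 j) (tendsto_pi_nhds.2 fun t => hlim t j)
  exact ⟨⟨u, hu, hmeas⟩, tendsto_pi_nhds.2 fun t => tendsto_pi_nhds.2 (hlim t)⟩

instance : OrderTop UbarPath where
  top := ⟨fun _ _ => 1, fun _ => ⟨rfl, fun _ => le_rfl, fun _ => zero_le_one⟩,
    fun _ => measurable_const⟩
  le_top u t j := ((u.inUbar t).mem_Icc j).2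

lemma exists_picard_eq_self (hF : IsCooperative c F) (hg : InUbar g) :
    ∃ u, picard hF hg u = u := by
  let U : ℕ → UbarPath := fun n => (picard hF hg)^[n] ⊤
  have hanti : Antitone U := (monotone_picard hF hg).antitone_iterate_of_map_le le_top
  obtain ⟨u, hu⟩ := exists_tendsto_of_antitone hanti
  have hsucc : Tendsto (fun n => (picard hF hg (U n)).1) atTop (𝓝 u.1) :=
    (hu.comp (tendsto_add_atTop_nat 1)).congr fun n =>
      congrArg Subtype.val (Function.iterate_succ_apply' _ n ⊤)
  exact ⟨u, Subtype.ext (tendsto_nhds_unique (tendsto_picard hF hg hu) hsucc)⟩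

lemma isUbarSol_of_picard_eq_self (hF : IsCooperative c F) (hg : InUbar g) {u : UbarPath}
    (hu : picard hF hg u = u) : IsUbarSol F g u.1 := by
  have hfix : ∀ t, u.1 t = picardFun c F g u t := fun t => congrFun (congrArg Subtype.val hu.symm) t
  have hcont : ∀ j, Continuous fun t => u.1 t j := fun j =>
    (continuous_picardFun hF u j).congr fun t => congrFun (hfix t).symm j
  have hsource : ∀ j, Continuous (source c F u j) := fun j =>
    (hF.continuous.comp ((hcont j).prodMk ((hcont (j + 1)).prodMk (hcont (j + 2))))).add
      ((hcont (j + 1)).const_mul c)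
  have hduhamel : ∀ j t, 0 ≤ t → u.1 t (j + 1) = duhamel c (g (j + 1)) (source c F u j) t :=
    fun j t ht => by rw [hfix, picardFun, max_eq_left ht]
  refine ⟨?_, fun t _ => u.inUbar t, fun j t ht => ?_⟩
  · rintro (_ | j)
    · rw [(u.inUbar 0).1, hg.1]
    · rw [hduhamel j 0 le_rfl, duhamel_zero]
  · refine (((hasDerivAt_duhamel (hsource j) (g (j + 1)) t).hasDerivWithinAt).congr
      (hduhamel j) (hduhamel j t ht)).congr_deriv ?_
    rw [← hduhamel j t ht, source, add_sub_cancel_right]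

end UbarPath

lemma IsCooperative.exists_isUbarSol {c : ℝ} {F : ℝ × ℝ × ℝ → ℝ} {g : ℕ → ℝ}
    (hF : IsCooperative c F) (hg : InUbar g) : ∃ u, IsUbarSol F g u :=
  let ⟨u, hu⟩ := UbarPath.exists_picard_eq_self hF hg
  ⟨u.1, UbarPath.isUbarSol_of_picard_eq_self hF hg hu⟩

/-- The retraction of `ℝ³` onto the unit cube that clamps every coordinate. -/
noncomputable def clampCube (p : ℝ × ℝ × ℝ) : ℝ × ℝ × ℝ :=
  (Set.projIcc 0 1 zero_le_one p.1, Set.projIcc 0 1 zero_le_one p.2.1,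
    Set.projIcc 0 1 zero_le_one p.2.2)

lemma clampCube_mem_Icc (p : ℝ × ℝ × ℝ) : clampCube p ∈ Set.Icc (0 : ℝ × ℝ × ℝ) 1 :=
  have h := fun x : ℝ => (Set.projIcc (0 : ℝ) 1 zero_le_one x).2
  ⟨⟨(h _).1, (h _).1, (h _).1⟩, (h _).2, (h _).2, (h _).2⟩

lemma clampCube_of_mem_Icc {p : ℝ × ℝ × ℝ} (hp : p ∈ Set.Icc (0 : ℝ × ℝ × ℝ) 1) :
    clampCube p = p := by
  obtain ⟨⟨hx₀, hy₀, hz₀⟩, hx₁, hy₁, hz₁⟩ := hp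
  simp only [clampCube, Set.projIcc_of_mem zero_le_one ⟨hx₀, hx₁⟩,
    Set.projIcc_of_mem zero_le_one ⟨hy₀, hy₁⟩, Set.projIcc_of_mem zero_le_one ⟨hz₀, hz₁⟩]

lemma monotone_clampCube : Monotone clampCube := fun _ _ h =>
  ⟨Set.monotone_projIcc zero_le_one h.1, Set.monotone_projIcc zero_le_one h.2.1,
    Set.monotone_projIcc zero_le_one h.2.2⟩

lemma lipschitzWith_clampCube : LipschitzWith 1 clampCube := by
  have h : LipschitzWith 1 fun x : ℝ => (Set.projIcc 0 1 zero_le_one x : ℝ) :=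
    LipschitzWith.projIcc zero_le_one
  have hprod : LipschitzWith (max (1 * 1) (max (1 * (1 * 1)) (1 * (1 * 1)))) clampCube :=
    (h.comp .prod_fst).prodMk <|
      (h.comp (LipschitzWith.prod_fst.comp .prod_snd)).prodMk
        (h.comp (LipschitzWith.prod_snd.comp .prod_snd))
  simpa only [mul_one, max_self] using hprod

theorem mfSol_exists_unique_general {F : ℝ × ℝ × ℝ → ℝ}
    (hlip : LocallyLipschitzOn (Set.Icc 0 1) F) (hmono : QuasimonotoneOn F (Set.Icc 0 1))
    (hF₀ : 0 ≤ F 0) (hF₁ : F 1 ≤ 0) {g : ℕ → ℝ} (hg : InUbar g) :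
    ∃ u : ℝ → ℕ → ℝ, IsUbarSol F g u ∧
      ∀ u' : ℝ → ℕ → ℝ, IsUbarSol F g u' → ∀ t ∈ Set.Ici (0 : ℝ), ∀ j, u' t j = u t j := by
  obtain ⟨K, hK⟩ := hlip.exists_lipschitzOnWith_of_compact isCompact_Icc
  have hK' : LipschitzWith K (F ∘ clampCube) := by
    simpa only [mul_one, lipschitzOnWith_univ] using
      hK.comp (lipschitzWith_clampCube.lipschitzOnWith (s := Set.univ))
        fun p _ => clampCube_mem_Icc p
  have heq : Set.EqOn (F ∘ clampCube) F (Set.Icc 0 1) := fun p hp =>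
    congrArg F (clampCube_of_mem_Icc hp)
  have hmono' : QuasimonotoneOn (F ∘ clampCube) Set.univ := fun p _ q _ hpq hmid =>
    hmono _ (clampCube_mem_Icc p) _ (clampCube_mem_Icc q) (monotone_clampCube hpq)
      (by simp only [clampCube, hmid])
  have hcoop : IsCooperative K (F ∘ clampCube) :=
    ⟨hK'.continuous, hmono'.monotone_add_mul hK',
      hF₀.trans_eq (heq ⟨le_rfl, zero_le_one⟩).symm, (heq ⟨zero_le_one, le_rfl⟩).trans_le hF₁⟩
  obtain ⟨u, hu⟩ := hcoop.exists_isUbarSol hg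
  exact ⟨u, hu.congr heq, fun u' hu' t ht j => (hu'.congr heq.symm).unique hK' hu ht j⟩

lemma add_two_mul_add_one_mul_choose_mul_choose (p q r : ℕ) :
    (p + q + 2).choose (p + 2 + r) * (p + r).choose r * ((p + 2 + r) * (p + 1 + r)) =
      (p + q + 2) * (p + q + 1) * (p + q).choose p * q.choose r := by
  have h₁ : (p + q + 2) * (p + q + 1).choose (p + 1 + r) =
      (p + q + 2).choose (p + 2 + r) * (p + 2 + r) := by
    simpa only [add_right_comm] using Nat.add_one_mul_choose_eq (p + q + 1) (p + 1 + r)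
  have h₂ : (p + q + 1) * (p + q).choose (p + r) =
      (p + q + 1).choose (p + 1 + r) * (p + 1 + r) := by
    simpa only [add_right_comm] using Nat.add_one_mul_choose_eq (p + q) (p + r)
  have h₃ : (p + q).choose (p + r) * (p + r).choose r = (p + q).choose p * q.choose r := by
    have h := Nat.choose_mul (n := p + q) (Nat.le_add_right p r)
    rwa [Nat.choose_symm_add, Nat.add_sub_cancel_left, Nat.add_sub_cancel_left] at h
  calc
    _ = (p + q + 2).choose (p + 2 + r) * (p + 2 + r) * (p + 1 + r) * (p + r).choose r := by ring
    _ = (p + q + 2) * ((p + q + 1).choose (p + 1 + r) * (p + 1 + r)) * (p + r).choose r := by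
      rw [← h₁]; ring
    _ = (p + q + 2) * (p + q + 1) * ((p + q).choose (p + r) * (p + r).choose r) := by
      rw [← h₂]; ring
    _ = _ := by rw [h₃]; ring

lemma fLk_self {k : ℕ} (hk : 1 ≤ k) (x : ℝ) : fLk k k x = k * x := by
  unfold fLk
  -- Only `i = 1` survives; there `k - k + 1 - 2` truncates to `0`, so the coefficient is `k`.
  rw [Finset.sum_eq_single_of_mem 1 (Finset.mem_Icc.2 ⟨le_rfl, hk⟩)]
  · simp
  · intro i hi hi1
    have hi0 : 1 ≤ i := (Finset.mem_Icc.1 hi).1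
    rw [Nat.choose_eq_zero_of_lt (show k - k + i - 2 < i - 1 by omega)]
    simp

lemma fLk_add_two_add_one (p q : ℕ) (x : ℝ) :
    fLk (p + q + 2) (q + 1) x = ∑ r ∈ Finset.range (q + 1),
      ((p + q + 2).choose (p + 2 + r) : ℝ) * (p + r).choose r * (-1) ^ r * x ^ (p + 2 + r) := by
  unfold fLk
  rw [← Finset.Ico_add_one_right_eq_Icc, Finset.sum_Ico_eq_sum_range]
  refine Finset.sum_congr (by simp) fun r _ => ?_
  rw [show p + q + 2 - (q + 1) + (1 + r) = p + 2 + r by omega,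
    show p + 2 + r - 2 = p + r by omega, show 1 + r - 1 = r by omega]

lemma contDiff_fLk (L k : ℕ) {n : WithTop ℕ∞} : ContDiff ℝ n (fLk L k) := by
  unfold fLk
  fun_prop

lemma deriv_fLk_add_two_add_one (p q : ℕ) :
    deriv (fLk (p + q + 2) (q + 1)) = fun x => ∑ r ∈ Finset.range (q + 1),
      ((p + q + 2).choose (p + 2 + r) : ℝ) * (p + r).choose r * (-1) ^ r *
        ((p + 2 + r) * x ^ (p + 1 + r)) := by
  ext x
  rw [funext (fLk_add_two_add_one p q)]
  refine (HasDerivAt.fun_sum fun r _ => ((hasDerivAt_pow (p + 2 + r) x).const_mul _)).deriv.trans ?_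
  refine Finset.sum_congr rfl fun r _ => ?_
  rw [show p + 2 + r - 1 = p + 1 + r by omega]
  push_cast
  rfl

lemma deriv_deriv_fLk_add_two_add_one (p q : ℕ) (x : ℝ) :
    deriv (deriv (fLk (p + q + 2) (q + 1))) x =
      (p + q + 2) * (p + q + 1) * (p + q).choose p * x ^ p * (1 - x) ^ q := by
  rw [deriv_fLk_add_two_add_one]
  refine (HasDerivAt.fun_sum fun r _ =>
    ((hasDerivAt_pow (p + 1 + r) x).const_mul ((p : ℝ) + 2 + r)).const_mul _).deriv.trans ?_
  rw [sub_eq_neg_add, add_pow, Finset.mul_sum]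
  refine Finset.sum_congr rfl fun r _ => ?_
  have hcoeff : ((p + q + 2).choose (p + 2 + r) : ℝ) * (p + r).choose r *
      ((p + 2 + r) * (p + 1 + r)) = (p + q + 2) * (p + q + 1) * (p + q).choose p * q.choose r :=
    mod_cast add_two_mul_add_one_mul_choose_mul_choose p q r
  rw [show p + 1 + r - 1 = p + r by omega, neg_pow, pow_add, one_pow]
  push_cast
  linear_combination (-1) ^ r * x ^ p * x ^ r * hcoeff

lemma monotoneOn_Icc_of_deriv_deriv_nonneg {f : ℝ → ℝ} {a b : ℝ} (hf : ContDiff ℝ 2 f)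
    (ha : 0 ≤ deriv f a) (hf'' : ∀ x ∈ Set.Icc a b, 0 ≤ deriv (deriv f) x) :
    MonotoneOn f (Set.Icc a b) := by
  have hf' : ContDiff ℝ 1 (deriv f) := hf.deriv'
  have hmono : MonotoneOn (deriv f) (Set.Icc a b) :=
    monotoneOn_of_deriv_nonneg (convex_Icc a b) hf'.continuous.continuousOn
      (hf'.differentiable one_ne_zero).differentiableOn fun x hx => hf'' x (interior_subset hx)
  refine monotoneOn_of_deriv_nonneg (convex_Icc a b) hf.continuous.continuousOn
    (hf.differentiable two_ne_zero).differentiableOn fun x hx => ?_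
  have hx := interior_subset hx
  exact ha.trans (hmono (Set.left_mem_Icc.2 (hx.1.trans hx.2)) hx hx.1)

lemma monotoneOn_fLk {L k : ℕ} (hk : 1 ≤ k) (hkL : k ≤ L) :
    MonotoneOn (fLk L k) (Set.Icc 0 1) := by
  rcases hkL.eq_or_lt with rfl | hlt
  · simp only [funext (fLk_self hk)]
    exact (monotone_id.const_mul k.cast_nonneg).monotoneOn _
  obtain ⟨q, rfl⟩ : ∃ q, k = q + 1 := ⟨k - 1, by omega⟩
  obtain ⟨p, rfl⟩ : ∃ p, L = p + q + 2 := ⟨L - q - 2, by omega⟩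
  refine monotoneOn_Icc_of_deriv_deriv_nonneg (contDiff_fLk _ _) ?_ fun x hx => ?_
  · simp [deriv_fLk_add_two_add_one]
  · have hx₀ : 0 ≤ x := hx.1
    have hx₁ : 0 ≤ 1 - x := sub_nonneg.2 hx.2
    rw [deriv_deriv_fLk_add_two_add_one]
    positivity

/-- The right-hand side of the mean-field system as a function of `(u_{j-1}, u_j, u_{j+1})`. -/
noncomputable def mfField (L k : ℕ) (lam : ℝ) (p : ℝ × ℝ × ℝ) : ℝ :=
  lam * (fLk L k p.1 - fLk L k p.2.1) - k * (p.2.1 - p.2.2)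

lemma isMFSol_iff {L k : ℕ} {lam : ℝ} {g : ℕ → ℝ} {u : ℝ → ℕ → ℝ} :
    IsMFSol L k lam g u ↔ IsUbarSol (mfField L k lam) g u := by
  constructor
  · rintro ⟨h₀, hmem, hderiv⟩
    exact ⟨h₀, hmem, fun j => hderiv (j + 1) j.succ_pos⟩
  · rintro ⟨h₀, hmem, hderiv⟩
    refine ⟨h₀, hmem, ?_⟩
    rintro (_ | j) hj
    · exact absurd hj (by decide)
    · exact hderiv j

lemma contDiff_mfField (L k : ℕ) (lam : ℝ) {n : WithTop ℕ∞} : ContDiff ℝ n (mfField L k lam) := by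
  have := contDiff_fLk L k (n := n)
  unfold mfField
  fun_prop

lemma quasimonotoneOn_mfField {L k : ℕ} (hk : 1 ≤ k) (hkL : k ≤ L) {lam : ℝ} (hlam : 0 ≤ lam) :
    QuasimonotoneOn (mfField L k lam) (Set.Icc 0 1) := by
  intro p hp q hq hpq hmid
  have hf : fLk L k p.1 ≤ fLk L k q.1 :=
    monotoneOn_fLk hk hkL ⟨hp.1.1, hp.2.1⟩ ⟨hq.1.1, hq.2.1⟩ hpq.1
  have hz : p.2.2 ≤ q.2.2 := hpq.2.2
  unfold mfField
  rw [hmid]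
  gcongr

/-- Lemma 5.3 (i): for every `g ∈ Ū` there exists exactly one
`Ū`-valued solution of the mean-field ODE system with initial condition `g`. -/
theorem mfSol_exists_unique (L k : ℕ) (hk : 1 ≤ k) (hkL : k ≤ L)
    (lam : ℝ) (hlam : 0 < lam) (g : ℕ → ℝ) (hg : InUbar g) :
    ∃ u : ℝ → ℕ → ℝ, IsMFSol L k lam g u ∧
      ∀ u' : ℝ → ℕ → ℝ, IsMFSol L k lam g u' →
        ∀ t ∈ Set.Ici (0 : ℝ), ∀ j, u' t j = u t j := by
  simpa only [isMFSol_iff] using mfSol_exists_unique_general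
    (contDiff_mfField L k lam).locallyLipschitz.locallyLipschitzOn
    (quasimonotoneOn_mfField hk hkL hlam.le) (by simp [mfField]) (by simp [mfField]) hg
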